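/- arXiv:1507.00369 — 2 statements merged into one kernel-verified Lean document; each statement's English description precedes it below -/
import Mathlib

section
/- Let a be a nonzero natural number. Suppose that for every natural number k there exists r ∈ R_a such that ak + r is not of the form 4^s(8t+7) for any natural numbers s, t. Then every natural number N can be written as the sum of three terms of the sequence (⌊n²/a⌋)_{n∈ℕ}, i.e., there exist natural numbers A, B, C with N = ⌊A²/a⌋ + ⌊B²/a⌋ + ⌊C²/a⌋. -/
/-- `Q a` is the set of nonzero quadratic residues modulo `a`. -/
def Qres (a : ℕ) : Set ℕ :=
  {φ | 0 < φ ∧ φ < a ∧ ∃ x : ℤ, (φ : ℤ) ≡ x ^ 2 [ZMOD (a : ℤ)]}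

/-- `Ares a` is the set of naturals writable as a sum of three elements of `Q a ∪ {0}`. -/
def Ares (a : ℕ) : Set ℕ :=
  {φ | ∃ x ∈ Qres a ∪ {0}, ∃ y ∈ Qres a ∪ {0}, ∃ z ∈ Qres a ∪ {0}, φ = x + y + z}

/-- `Rres a` is the set of elements of `Ares a` that are unique in their residue class mod `a`. -/
def Rres (a : ℕ) : Set ℕ :=
  {φ | φ ∈ Ares a ∧ ∀ ψ ∈ Ares a, ψ ≡ φ [MOD a] → ψ = φ}

/-!
A positive definite integer matrix of determinant `1` and size at most `5` is `Uᵀ * U` with `U`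
integral: by Hermite's inequality the minimum of its quadratic form over the primitive vectors is
`1`, so a vector of norm `1` splits off. If `-d` is a square modulo `m = d * n - 1`, say
`k ^ 2 + d = m * b`, then the matrix with rows `(m, k, 0)`, `(k, b, 1)`, `(0, 1, n)` is of this
kind, and its last diagonal entry shows that `n` is a sum of three squares. For `n` not divisible
by `4` and not `7` modulo `8`, Dirichlet's theorem provides a `d` for which `m` is a prime or twice
a prime, and quadratic reciprocity turns the condition on `-d` into one modulo `d`, where
`m ≡ -1`. This yields Legendre's three-square theorem.

Now let `a * N + r = A ^ 2 + B ^ 2 + C ^ 2`. The remainders of the three squares modulo `a` add up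
to an element of `Ares a` congruent to `r`; by uniqueness it is `r`, so the quotients add up
to `N`.
-/

section BorderedMatrices

open Matrix

variable {R : Type*} [CommRing R] {m n : ℕ}

/-- The block matrix with rows `(a, l)` and `(0, W)`. It is used both to extend bases of `Rⁿ` to
bases of `Rⁿ⁺¹` and as one step of an LDLᵀ decomposition. -/
def bordered (a : R) (l : Fin n → R) (W : Matrix (Fin m) (Fin n) R) :
    Matrix (Fin (m + 1)) (Fin (n + 1)) R :=
  of (vecCons (vecCons a l) fun i ↦ vecCons 0 (W.row i))

/-- The Schur complement of the corner entry `M 0 0`, multiplied by `M 0 0` so that no division is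
needed. -/
def scaledSchur (M : Matrix (Fin (n + 1)) (Fin (n + 1)) R) : Matrix (Fin n) (Fin n) R :=
  M 0 0 • M.submatrix Fin.succ Fin.succ - vecMulVec (fun i ↦ M i.succ 0) fun j ↦ M 0 j.succ

lemma det_bordered (a : R) (l : Fin n → R) (W : Matrix (Fin n) (Fin n) R) :
    (bordered a l W).det = a * W.det := by
  have hW : (bordered a l W).submatrix Fin.succ Fin.succ = W := rfl
  simp [det_succ_column_zero, Fin.sum_univ_succ, hW, show bordered a l W 0 0 = a from rfl,
    show ∀ i : Fin n, bordered a l W i.succ 0 = 0 from fun _ ↦ rfl]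

lemma mul_det_scaledSchur (M : Matrix (Fin (n + 1)) (Fin (n + 1)) R) :
    M 0 0 * (scaledSchur M).det = M 0 0 ^ n * M.det := by
  let v : Fin (n + 1) → R := vecCons 1 fun _ ↦ M 0 0
  have hM : (of fun i j ↦ v i * M i j).det = M 0 0 ^ n * M.det := by
    simp [det_mul_column, v, Fin.prod_univ_succ]
  rw [← hM, ← det_bordered _ (fun j ↦ M 0 j.succ)]
  refine det_eq_of_forall_row_eq_smul_add_const (vecCons 0 fun i ↦ -M i.succ 0) 0 rfl fun i j ↦ ?_
  cases i using Fin.cases <;> cases j using Fin.cases <;>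
    simp [bordered, v, scaledSchur, vecMulVec_apply] <;> ring

lemma mul_dotProduct_mulVec_vecCons {M : Matrix (Fin (n + 1)) (Fin (n + 1)) R} (hM : M.IsSymm)
    (k : R) (y : Fin n → R) :
    M 0 0 * (vecCons k y ⬝ᵥ M *ᵥ vecCons k y) =
      (M 0 0 * k + (fun j ↦ M 0 j.succ) ⬝ᵥ y) ^ 2 + y ⬝ᵥ scaledSchur M *ᵥ y := by
  have hrow : (fun i : Fin n ↦ M i.succ 0) = fun j ↦ M 0 j.succ := funext fun _ ↦ hM.apply _ _
  have hMv : M *ᵥ vecCons k y = vecCons (M 0 0 * k + (fun j ↦ M 0 j.succ) ⬝ᵥ y)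
      (k • (fun j ↦ M 0 j.succ) + M.submatrix Fin.succ Fin.succ *ᵥ y) := by
    ext i
    cases i using Fin.cases <;>
      simp [mulVec, dotProduct, Fin.sum_univ_succ, hM.apply, mul_comm]
  have hSy : y ⬝ᵥ scaledSchur M *ᵥ y = M 0 0 * (y ⬝ᵥ M.submatrix Fin.succ Fin.succ *ᵥ y) -
      ((fun j ↦ M 0 j.succ) ⬝ᵥ y) ^ 2 := by
    simp [scaledSchur, hrow, sub_mulVec, smul_mulVec, vecMulVec_mulVec, dotProduct_comm y, sq]
  rw [hMv, hSy, cons_dotProduct_cons, dotProduct_add, dotProduct_smul, smul_eq_mul,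
    dotProduct_comm y fun j ↦ M 0 j.succ]
  ring

lemma isSymm_scaledSchur {M : Matrix (Fin (n + 1)) (Fin (n + 1)) R} (hM : M.IsSymm) :
    (scaledSchur M).IsSymm := by
  ext i j
  simp [scaledSchur, vecMulVec_apply, hM.apply, mul_comm]

lemma eq_transpose_bordered_mul_bordered {M : Matrix (Fin (n + 1)) (Fin (n + 1)) R}
    (hM : M.IsSymm) (h1 : M 0 0 = 1) {W : Matrix (Fin m) (Fin n) R} (hW : scaledSchur M = Wᵀ * W) :
    M = (bordered 1 (fun j ↦ M 0 j.succ) W)ᵀ * bordered 1 (fun j ↦ M 0 j.succ) W := by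
  have hsucc (i j : Fin n) : M i.succ j.succ = M i.succ 0 * M 0 j.succ + (Wᵀ * W) i j := by
    simp [← hW, scaledSchur, vecMulVec_apply, h1]
  ext i j
  cases i using Fin.cases <;> cases j using Fin.cases <;>
    simp [bordered, mul_apply, Fin.sum_univ_succ, h1, hM.apply, hsucc]

lemma posDef_scaledSchur [LinearOrder R] [IsStrictOrderedRing R] [StarRing R] [TrivialStar R]
    {M : Matrix (Fin (n + 1)) (Fin (n + 1)) R} (hM : M.PosDef) : (scaledSchur M).PosDef := by
  have hsymm : M.IsSymm := isHermitian_iff_isSymm.1 hM.isHermitian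
  refine .of_dotProduct_mulVec_pos (isHermitian_iff_isSymm.2 (isSymm_scaledSchur hsymm))
    fun y hy ↦ ?_
  set a := M 0 0
  have ha : 0 < a := hM.diag_pos
  set b := (fun j ↦ M 0 j.succ) ⬝ᵥ y
  -- This choice of `x` kills the square in `mul_dotProduct_mulVec_vecCons`.
  set x := vecCons (-b) (a • y)
  have hx0 : x ≠ 0 := fun h ↦ hy <| by simpa [ha.ne'] using (cons_eq_zero_iff.1 h).2
  have hpos : 0 < x ⬝ᵥ M *ᵥ x := by simpa only [star_trivial] using hM.dotProduct_mulVec_pos hx0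
  have hxy : a * (x ⬝ᵥ M *ᵥ x) = a * (a * (y ⬝ᵥ scaledSchur M *ᵥ y)) := by
    rw [mul_dotProduct_mulVec_vecCons hsymm]
    simp [mulVec_smul, a, b]
  rw [star_trivial]
  exact pos_of_mul_pos_right (mul_left_cancel₀ ha.ne' hxy ▸ hpos) ha.le

end BorderedMatrices

section PrimitiveVectors

open Matrix

variable {R ι : Type*} [CommRing R] [Fintype ι] [DecidableEq ι]

/-- A vector of `ι → R` is primitive if it is a column of an invertible matrix, that is, a member
of a basis. Over `ℤ` these are the vectors with coprime entries. -/
def IsPrimitiveVector (x : ι → R) : Prop :=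
  ∃ U : Matrix ι ι R, IsUnit U ∧ ∃ i, U.col i = x

lemma isPrimitiveVector_single (i : ι) : IsPrimitiveVector (Pi.single i 1 : ι → R) :=
  ⟨1, isUnit_one, i, by ext j; simp [one_apply, Pi.single_apply]⟩

namespace IsPrimitiveVector

lemma mulVec {x : ι → R} (hx : IsPrimitiveVector x) {U : Matrix ι ι R} (hU : IsUnit U) :
    IsPrimitiveVector (U *ᵥ x) := by
  obtain ⟨V, hV, i, rfl⟩ := hx
  exact ⟨U * V, hU.mul hV, i, rfl⟩

lemma ne_zero [Nontrivial R] {x : ι → R} (hx : IsPrimitiveVector x) : x ≠ 0 := by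
  obtain ⟨U, hU, i, rfl⟩ := hx
  rw [← mulVec_single_one, ← mulVec_zero U]
  exact (mulVec_injective_of_isUnit hU).ne (by simp)

lemma exists_col_eq {x : ι → R} (hx : IsPrimitiveVector x) (i : ι) :
    ∃ U : Matrix ι ι R, IsUnit U ∧ U.col i = x := by
  obtain ⟨U, hU, j, rfl⟩ := hx
  refine ⟨U.submatrix id (Equiv.swap i j), ?_, by ext; simp⟩
  rw [isUnit_iff_isUnit_det] at hU ⊢
  rw [det_permute']
  exact ((Equiv.Perm.sign _).isUnit.map (Int.castRingHom R)).mul hU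

lemma vecCons {n : ℕ} {y : Fin n → R} (hy : IsPrimitiveVector y) (k : R) :
    IsPrimitiveVector (vecCons k y) := by
  obtain ⟨U, hU, i, rfl⟩ := hy
  refine ⟨bordered 1 (Pi.single i k) U, ?_, i.succ, ?_⟩
  · rw [isUnit_iff_isUnit_det] at hU ⊢
    rwa [det_bordered, one_mul]
  · ext j
    cases j using Fin.cases <;> simp [bordered]

end IsPrimitiveVector

end PrimitiveVectors

section ChangeOfBasis

open Matrix

variable {R ι κ : Type*} [CommRing R] [Fintype ι]

lemma dotProduct_transpose_mul_mul_mulVec [Fintype κ] (U : Matrix ι κ R) (M : Matrix ι ι R)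
    (x y : κ → R) : x ⬝ᵥ (Uᵀ * M * U) *ᵥ y = (U *ᵥ x) ⬝ᵥ M *ᵥ (U *ᵥ y) := by
  simp only [← mulVec_mulVec, dotProduct_mulVec, vecMul_transpose]

lemma transpose_mul_mul_apply (U : Matrix ι κ R) (M : Matrix ι ι R) (i j : κ) :
    (Uᵀ * M * U) i j = U.col i ⬝ᵥ M *ᵥ U.col j := by
  rw [Matrix.mul_assoc]
  rfl

variable [DecidableEq ι]

lemma det_transpose_mul_mul (U M : Matrix ι ι R) : (Uᵀ * M * U).det = U.det ^ 2 * M.det := by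
  rw [det_mul, det_mul, det_transpose]
  ring

lemma det_transpose_mul_mul_of_isUnit {U : Matrix ι ι ℤ} (hU : IsUnit U) (M : Matrix ι ι ℤ) :
    (Uᵀ * M * U).det = M.det := by
  rw [det_transpose_mul_mul, Int.isUnit_sq ((isUnit_iff_isUnit_det _).1 hU), one_mul]

lemma posDef_transpose_mul_mul [PartialOrder R] [StarRing R] [TrivialStar R] {U M : Matrix ι ι R}
    (hM : M.PosDef) (hU : IsUnit U) : (Uᵀ * M * U).PosDef := by
  simpa only [conjTranspose_eq_transpose_of_trivial] using
    hM.conjTranspose_mul_mul_same (mulVec_injective_of_isUnit hU)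

end ChangeOfBasis

section HermiteReduction

open Matrix

variable {n : ℕ}

lemma exists_isPrimitiveVector_forall_le {ι : Type*} [Fintype ι] [DecidableEq ι] [Nonempty ι]
    {M : Matrix ι ι ℤ} (hM : M.PosDef) :
    ∃ x, IsPrimitiveVector x ∧ ∀ y, IsPrimitiveVector y → x ⬝ᵥ M *ᵥ x ≤ y ⬝ᵥ M *ᵥ y := by
  obtain ⟨x, hx, hmin⟩ := exists_minimalFor_of_wellFoundedLT (IsPrimitiveVector (R := ℤ) (ι := ι))
    (fun x ↦ (x ⬝ᵥ M *ᵥ x).toNat) ⟨_, isPrimitiveVector_single (Classical.arbitrary ι)⟩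
  refine ⟨x, hx, fun y hy ↦ ?_⟩
  have hpos : 0 < y ⬝ᵥ M *ᵥ y := by
    simpa only [star_trivial] using hM.dotProduct_mulVec_pos hy.ne_zero
  have hxy : (x ⬝ᵥ M *ᵥ x).toNat ≤ (y ⬝ᵥ M *ᵥ y).toNat := (le_total _ _).elim id (hmin hy)
  omega

lemma exists_sq_two_mul_mul_add_le_sq {a : ℤ} (ha : 0 < a) (b : ℤ) :
    ∃ k, (2 * (a * k + b)) ^ 2 ≤ a ^ 2 := by
  refine ⟨-((2 * b + a) / (2 * a)), sq_le_sq' ?_ ?_⟩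
  all_goals
    have := Int.emod_add_mul_ediv (2 * b + a) (2 * a)
    have := Int.emod_lt_of_pos (2 * b + a) (b := 2 * a) (by omega)
    have := Int.emod_nonneg (2 * b + a) (b := 2 * a) (by omega)
    linarith

lemma three_mul_sq_corner_le {M : Matrix (Fin (n + 1)) (Fin (n + 1)) ℤ} (hM : M.IsSymm)
    (ha : 0 < M 0 0) {y : Fin n → ℤ} (hmin : ∀ k, M 0 0 ≤ vecCons k y ⬝ᵥ M *ᵥ vecCons k y) :
    3 * M 0 0 ^ 2 ≤ 4 * (y ⬝ᵥ scaledSchur M *ᵥ y) := by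
  obtain ⟨k, hk⟩ := exists_sq_two_mul_mul_add_le_sq ha ((fun j ↦ M 0 j.succ) ⬝ᵥ y)
  have hle := mul_le_mul_of_nonneg_left (hmin k) ha.le
  rw [mul_dotProduct_mulVec_vecCons hM] at hle
  linarith

lemma corner_pow_le_of_scaledSchur {M : Matrix (Fin (n + 2)) (Fin (n + 2)) ℤ} {e : ℕ} {c : ℤ}
    (ha : 0 < M 0 0) (hac : 3 * M 0 0 ^ 2 ≤ 4 * c)
    (hc : 3 ^ e * c ^ (n + 1) ≤ 4 ^ e * (scaledSchur M).det) :
    3 ^ (n + 1 + e) * M 0 0 ^ (n + 2) ≤ 4 ^ (n + 1 + e) * M.det := by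
  have hdet : (scaledSchur M).det = M 0 0 ^ n * M.det :=
    mul_left_cancel₀ ha.ne' <| by rw [mul_det_scaledSchur]; ring
  rw [hdet] at hc
  refine le_of_mul_le_mul_left ?_ (pow_pos ha n)
  calc M 0 0 ^ n * (3 ^ (n + 1 + e) * M 0 0 ^ (n + 2))
      = 3 ^ e * (3 * M 0 0 ^ 2) ^ (n + 1) := by ring
    _ ≤ 3 ^ e * (4 * c) ^ (n + 1) := by gcongr
    _ = 4 ^ (n + 1) * (3 ^ e * c ^ (n + 1)) := by ring
    _ ≤ 4 ^ (n + 1) * (4 ^ e * (M 0 0 ^ n * M.det)) := by gcongr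
    _ = M 0 0 ^ n * (4 ^ (n + 1 + e) * M.det) := by ring

theorem exists_isPrimitiveVector_hermite_le {M : Matrix (Fin (n + 1)) (Fin (n + 1)) ℤ}
    (hM : M.PosDef) :
    ∃ x, IsPrimitiveVector x ∧
      3 ^ (n + 1).choose 2 * (x ⬝ᵥ M *ᵥ x) ^ (n + 1) ≤ 4 ^ (n + 1).choose 2 * M.det := by
  induction n with
  | zero => exact ⟨_, isPrimitiveVector_single 0, by simp⟩
  | succ n ih =>
    obtain ⟨x, hx, hmin⟩ := exists_isPrimitiveVector_forall_le hM
    -- Pass to a basis that starts with the minimal vector, whose norm becomes the corner entry.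
    obtain ⟨U, hU, rfl⟩ := hx.exists_col_eq 0
    refine ⟨_, hx, ?_⟩
    rw [← transpose_mul_mul_apply, ← det_transpose_mul_mul_of_isUnit hU M]
    have hN := posDef_transpose_mul_mul hM hU
    have hNmin (y) (hy : IsPrimitiveVector y) :
        (Uᵀ * M * U) 0 0 ≤ y ⬝ᵥ (Uᵀ * M * U) *ᵥ y := by
      rw [transpose_mul_mul_apply, dotProduct_transpose_mul_mul_mulVec]
      exact hmin _ (hy.mulVec hU)
    generalize Uᵀ * M * U = N at hN hNmin ⊢
    obtain ⟨y, hy, hyN⟩ := ih (posDef_scaledSchur hN)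
    have hstep := three_mul_sq_corner_le (isHermitian_iff_isSymm.1 hN.isHermitian) hN.diag_pos
      fun k ↦ hNmin _ (hy.vecCons k)
    rw [Nat.choose_succ_succ' (n + 1), Nat.choose_one_right]
    exact corner_pow_le_of_scaledSchur hN.diag_pos hstep hyN

lemma exists_isPrimitiveVector_dotProduct_mulVec_eq_one (hn : n ≤ 4)
    {M : Matrix (Fin (n + 1)) (Fin (n + 1)) ℤ} (hM : M.PosDef) (hdet : M.det = 1) :
    ∃ x, IsPrimitiveVector x ∧ x ⬝ᵥ M *ᵥ x = 1 := by
  obtain ⟨x, hx, hle⟩ := exists_isPrimitiveVector_hermite_le hM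
  have hpos : 0 < x ⬝ᵥ M *ᵥ x := by
    simpa only [star_trivial] using hM.dotProduct_mulVec_pos hx.ne_zero
  refine ⟨x, hx, le_antisymm (not_lt.1 fun hlt ↦ hle.not_gt ?_) hpos⟩
  calc 4 ^ (n + 1).choose 2 * M.det < 3 ^ (n + 1).choose 2 * 2 ^ (n + 1) := by
        rw [hdet]
        interval_cases n <;> decide
    _ ≤ 3 ^ (n + 1).choose 2 * (x ⬝ᵥ M *ᵥ x) ^ (n + 1) := by gcongr; omega

theorem exists_eq_transpose_mul_self (hn : n ≤ 5) {M : Matrix (Fin n) (Fin n) ℤ}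
    (hM : M.PosDef) (hdet : M.det = 1) : ∃ U : Matrix (Fin n) (Fin n) ℤ, M = Uᵀ * U := by
  induction n with
  | zero => exact ⟨0, Subsingleton.elim _ _⟩
  | succ n ih =>
    obtain ⟨x, hx, hx1⟩ := exists_isPrimitiveVector_dotProduct_mulVec_eq_one (by omega) hM hdet
    obtain ⟨U, hU, rfl⟩ := hx.exists_col_eq 0
    rw [← transpose_mul_mul_apply] at hx1
    have hN := posDef_transpose_mul_mul hM hU
    have hNdet := det_transpose_mul_mul_of_isUnit hU M
    obtain ⟨W, hW⟩ := ih (by omega) (posDef_scaledSchur hN)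
      (by simpa [hx1, hdet, hNdet] using mul_det_scaledSchur (Uᵀ * M * U))
    have hV := eq_transpose_bordered_mul_bordered (isHermitian_iff_isSymm.1 hN.isHermitian) hx1 hW
    generalize bordered 1 _ W = V at hV
    have hUdet := (isUnit_iff_isUnit_det _).1 hU
    refine ⟨V * U⁻¹, ?_⟩
    calc M = (U * U⁻¹)ᵀ * M * (U * U⁻¹) := by
          rw [mul_nonsing_inv _ hUdet, transpose_one, Matrix.one_mul, Matrix.mul_one]
      _ = U⁻¹ᵀ * (Uᵀ * M * U) * U⁻¹ := by simp only [transpose_mul, Matrix.mul_assoc]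
      _ = (V * U⁻¹)ᵀ * (V * U⁻¹) := by rw [hV]; simp only [transpose_mul, Matrix.mul_assoc]

end HermiteReduction

section TernaryForm

open Matrix

lemma posDef_ternary {R : Type*} [CommRing R] [LinearOrder R] [IsStrictOrderedRing R] [StarRing R]
    [TrivialStar R] {n d k m b : R} (hd : 0 < d) (hm : 0 < m) (hmn : m + 1 = d * n)
    (hb : k ^ 2 + d = m * b) : !![m, k, 0; k, b, 1; 0, 1, n].PosDef := by
  refine .of_dotProduct_mulVec_pos
    (isHermitian_iff_isSymm.2 (by ext i j; fin_cases i <;> fin_cases j <;> rfl)) fun v hv ↦ ?_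
  rw [star_trivial]
  set q := v ⬝ᵥ !![m, k, 0; k, b, 1; 0, 1, n] *ᵥ v with hq
  have hsq : d * m * q =
      d * (m * v 0 + k * v 1) ^ 2 + (d * v 1 + m * v 2) ^ 2 + m * v 2 ^ 2 := by
    rw [hq]
    simp only [dotProduct, mulVec, Fin.sum_univ_three, of_apply, cons_val]
    linear_combination (-d * v 1 ^ 2) * hb - m * v 2 ^ 2 * hmn
  suffices d * m * q ≠ 0 from pos_of_mul_pos_right
    (lt_of_le_of_ne (by rw [hsq]; positivity) this.symm) (by positivity)
  rw [hsq]
  intro h0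
  rw [add_eq_zero_iff_of_nonneg (by positivity) (by positivity),
    add_eq_zero_iff_of_nonneg (by positivity) (by positivity)] at h0
  have h2 : v 2 = 0 := by simpa [hm.ne'] using h0.2
  have h1 : v 1 = 0 := by simpa [h2, hd.ne'] using h0.1.2
  have h0 : v 0 = 0 := by simpa [h1, hd.ne', hm.ne'] using h0.1.1
  exact hv (by ext i; fin_cases i <;> assumption)

lemma exists_sum_three_sq_of_dvd_sq_add {n d k m : ℤ} (hd : 0 < d) (hm : 0 < m)
    (hmn : m + 1 = d * n) (h : m ∣ k ^ 2 + d) : ∃ x y z : ℤ, x ^ 2 + y ^ 2 + z ^ 2 = n := by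
  obtain ⟨b, hb⟩ := h
  have hdet : !![m, k, 0; k, b, 1; 0, 1, n].det = 1 := by
    simp only [det_fin_three, of_apply, cons_val]
    linear_combination -n * hb - hmn
  obtain ⟨U, hU⟩ := exists_eq_transpose_mul_self (by simp) (posDef_ternary hd hm hmn hb) hdet
  refine ⟨U 0 2, U 1 2, U 2 2, ?_⟩
  simpa [mul_apply, Fin.sum_univ_three, sq, eq_comm] using congr_fun₂ hU 2 2

end TernaryForm

section ThreeSquares

open scoped NumberTheorySymbols

lemma jacobiSym_neg_left_eq_flip {d p : ℕ} (hd : Odd d) (hp : Odd p) (h : p % 4 = 1 ∨ d % 4 = 3) :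
    J(-d | p) = J(p | d) := by
  rw [jacobiSym.neg _ hp]
  rcases Nat.odd_mod_four_iff.1 (Nat.odd_iff.1 hp) with hp4 | hp4
  · rw [ZMod.χ₄_nat_one_mod_four hp4, one_mul, jacobiSym.quadratic_reciprocity_one_mod_four' hd hp4]
  · have hd4 : d % 4 = 3 := by omega
    rw [ZMod.χ₄_nat_three_mod_four hp4, jacobiSym.quadratic_reciprocity_three_mod_four hd4 hp4]
    ring

lemma jacobiSym_eq_one_of_dvd_mul_sub_one {a b : ℤ} {d : ℕ} (h : (d : ℤ) ∣ a * b - 1)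
    (ha : J(a | d) = 1) : J(b | d) = 1 := by
  have hab : J(a * b | d) = J(1 | d) :=
    jacobiSym.mod_left' (Int.emod_eq_emod_iff_emod_sub_eq_zero.2 (Int.emod_eq_zero_of_dvd h))
  simpa [jacobiSym.mul_left, ha] using hab

lemma exists_dvd_sq_sub_of_jacobiSym_eq_one {p : ℕ} (hp : p.Prime) {a : ℤ} (h : J(a | p) = 1) :
    ∃ k : ℤ, (p : ℤ) ∣ k ^ 2 - a := by
  have := Fact.mk hp
  obtain ⟨r, hr⟩ := ZMod.isSquare_of_jacobiSym_eq_one h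
  obtain ⟨k, rfl⟩ := ZMod.intCast_surjective r
  refine ⟨k, (ZMod.intCast_zmod_eq_zero_iff_dvd _ _).1 ?_⟩
  push_cast
  linear_combination -hr

lemma exists_mul_dvd_sq_sub {R : Type*} [CommRing R] {m n a k l : R} (hmn : IsCoprime m n)
    (hk : m ∣ k ^ 2 - a) (hl : n ∣ l ^ 2 - a) : ∃ x, m * n ∣ x ^ 2 - a := by
  have ⟨u, v, huv⟩ := hmn
  have hm : m ∣ (l * (u * m) + k * (v * n)) - k := ⟨u * (l - k), by linear_combination k * huv⟩
  have hn : n ∣ (l * (u * m) + k * (v * n)) - l := ⟨v * (k - l), by linear_combination l * huv⟩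
  refine ⟨l * (u * m) + k * (v * n), hmn.mul_dvd ?_ ?_⟩
  · simpa using dvd_add (hm.trans (sub_dvd_pow_sub_pow _ _ 2)) hk
  · simpa using dvd_add (hn.trans (sub_dvd_pow_sub_pow _ _ 2)) hl

lemma exists_mul_dvd_sq_add_of_jacobiSym_eq_one {e p d : ℕ} (he : e ∣ 2) (hp : p.Prime)
    (hp2 : Odd p) (hd : Odd d) (hdp : d ∣ e * p + 1) (hpd : p % 4 = 1 ∨ d % 4 = 3)
    (hJ : J(-e | d) = 1) : ∃ k : ℤ, (e * p : ℤ) ∣ k ^ 2 + d := by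
  have hJp : J(-d | p) = 1 := by
    rw [jacobiSym_neg_left_eq_flip hd hp2 hpd]
    refine jacobiSym_eq_one_of_dvd_mul_sub_one ?_ hJ
    rw [show (-e * p - 1 : ℤ) = -(e * p + 1 : ℕ) by push_cast; ring, dvd_neg]
    exact mod_cast hdp
  obtain ⟨k, hk⟩ := exists_dvd_sq_sub_of_jacobiSym_eq_one hp hJp
  have hde : (e : ℤ) ∣ (d : ℤ) ^ 2 - -d := by
    rw [show (d : ℤ) ^ 2 - -d = d * (d + 1) by ring]
    exact (Int.natCast_dvd_natCast.2 he).trans (Int.even_mul_succ_self d).two_dvd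
  have hcop : IsCoprime (e : ℤ) p :=
    Nat.isCoprime_iff_coprime.2 <| .coprime_dvd_left he (Nat.coprime_two_left.2 hp2)
  simpa only [sub_neg_eq_add] using exists_mul_dvd_sq_sub hcop hde hk

lemma exists_prime_mul_add_one_eq {e c g n : ℕ} (hg : Odd g) (h : e * g + 1 = c * n) :
    ∃ p d, p.Prime ∧ e * p + 1 = d * n ∧ p ≡ g [MOD 4] ∧ d ≡ c [MOD 4 * e] := by
  have hn : n ≠ 0 := by
    rintro rfl
    omega
  have hcop : g.Coprime (4 * n) := by
    refine .mul_right (.pow_right 2 (Nat.coprime_two_right.2 hg))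
      (Nat.isCoprime_iff_coprime.1 ⟨-e, c, ?_⟩)
    linarith [(congrArg Nat.cast h : ((e * g + 1 : ℕ) : ℤ) = (c * n : ℕ))]
  obtain ⟨p, hgp, hp, hmod⟩ := Nat.forall_exists_prime_gt_and_modEq g (by omega) hcop
  obtain ⟨j, hj⟩ := (Nat.modEq_iff_dvd' hgp.le).1 hmod.symm
  have hpj : p = g + 4 * n * j := by omega
  refine ⟨p, c + 4 * e * j, hp, by rw [hpj]; linarith, hmod.of_mul_right n, ?_⟩
  simp [Nat.ModEq]

-- Only the classes of `g` modulo `4` and of `c` modulo `4 * e` matter, so Dirichlet's theorem lets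
-- us replace `g` by a prime.
theorem exists_sum_three_sq_of_jacobiSym_eq_one {n e c g : ℕ} (he : e ∣ 2) (hc : Odd c) (hg : Odd g)
    (h : e * g + 1 = c * n) (hJ : J(-e | c) = 1) (hgc : g % 4 = 1 ∨ c % 4 = 3) :
    ∃ x y z : ℤ, x ^ 2 + y ^ 2 + z ^ 2 = n := by
  obtain ⟨p, d, hp, hpd, hp4, hdc⟩ := exists_prime_mul_add_one_eq hg h
  have hd4 : d % 4 = c % 4 := hdc.of_mul_right e
  rw [Nat.ModEq] at hp4
  rw [Nat.odd_iff] at hc hg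
  have hd2 : Odd d := Nat.odd_iff.2 (by omega)
  have hp2 : Odd p := Nat.odd_iff.2 (by omega)
  have hJd : J(-e | d) = 1 := by
    rw [← hJ, jacobiSym.mod_right _ hd2, jacobiSym.mod_right _ (Nat.odd_iff.2 hc), Int.natAbs_neg,
      Int.natAbs_natCast, hdc]
  obtain ⟨k, hk⟩ :=
    exists_mul_dvd_sq_add_of_jacobiSym_eq_one he hp hp2 hd2 ⟨n, hpd⟩ (by omega) hJd
  have he0 : 0 < e := Nat.pos_of_dvd_of_pos he two_pos
  exact exists_sum_three_sq_of_dvd_sq_add (mod_cast hd2.pos)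
    (mod_cast Nat.mul_pos he0 hp.pos) (mod_cast hpd) hk

lemma exists_sum_three_sq_of_mod_four_ne_zero {n : ℕ} (h4 : n % 4 ≠ 0) (h7 : n % 8 ≠ 7) :
    ∃ x y z : ℤ, x ^ 2 + y ^ 2 + z ^ 2 = n := by
  have hcases : n % 4 = 2 ∨ n % 8 = 3 ∨ n % 4 = 1 := by omega
  rcases hcases with h | h | h
  · exact exists_sum_three_sq_of_jacobiSym_eq_one (e := 1) (c := 1) (g := n - 1) (by simp)
      odd_one (by grind) (by omega) (by simp) (by omega)
  · exact exists_sum_three_sq_of_jacobiSym_eq_one (e := 2) (c := 1) (g := n / 2) (by simp)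
      odd_one (by grind) (by omega) (by simp) (by omega)
  · exact exists_sum_three_sq_of_jacobiSym_eq_one (e := 2) (c := 3) (g := 3 * n / 2) (by simp)
      (by decide) (by grind) (by omega) (by norm_num) (by omega)

theorem exists_sum_three_sq (n : ℕ) (h : ∀ s t : ℕ, n ≠ 4 ^ s * (8 * t + 7)) :
    ∃ x y z : ℕ, x ^ 2 + y ^ 2 + z ^ 2 = n := by
  induction n using Nat.strong_induction_on with
  | _ n ih =>
  by_cases h4 : 4 ∣ n
  · obtain ⟨m, rfl⟩ := h4
    rcases m.eq_zero_or_pos with rfl | hm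
    · exact ⟨0, 0, 0, rfl⟩
    obtain ⟨x, y, z, rfl⟩ := ih m (by omega) fun s t hst ↦ h (s + 1) t (by rw [hst]; ring)
    exact ⟨2 * x, 2 * y, 2 * z, by ring⟩
  · obtain ⟨x, y, z, hxyz⟩ := exists_sum_three_sq_of_mod_four_ne_zero (n := n) (by omega)
      fun h7 ↦ h 0 (n / 8) (by omega)
    refine ⟨x.natAbs, y.natAbs, z.natAbs, ?_⟩
    zify
    simpa only [sq_abs] using hxyz

end ThreeSquares

section Remainders

variable {a : ℕ}

lemma sq_mod_mem_Qres_union_zero (ha : a ≠ 0) (A : ℕ) : A ^ 2 % a ∈ Qres a ∪ {0} := by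
  rcases (A ^ 2 % a).eq_zero_or_pos with h | h
  · exact .inr h
  · exact .inl ⟨h, Nat.mod_lt _ (Nat.pos_of_ne_zero ha), A, mod_cast Nat.mod_modEq (A ^ 2) a⟩

lemma sum_sq_mod_mem_Ares (ha : a ≠ 0) (A B C : ℕ) :
    A ^ 2 % a + B ^ 2 % a + C ^ 2 % a ∈ Ares a :=
  ⟨_, sq_mod_mem_Qres_union_zero ha A, _, sq_mod_mem_Qres_union_zero ha B,
    _, sq_mod_mem_Qres_union_zero ha C, rfl⟩

lemma eq_sum_sq_div_of_mem_Rres (ha : a ≠ 0) {N r A B C : ℕ} (hr : r ∈ Rres a)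
    (h : A ^ 2 + B ^ 2 + C ^ 2 = a * N + r) : N = A ^ 2 / a + B ^ 2 / a + C ^ 2 / a := by
  have hmod : A ^ 2 % a + B ^ 2 % a + C ^ 2 % a ≡ r [MOD a] :=
    calc A ^ 2 % a + B ^ 2 % a + C ^ 2 % a
        ≡ A ^ 2 + B ^ 2 + C ^ 2 [MOD a] :=
          ((Nat.mod_modEq _ _).add (Nat.mod_modEq _ _)).add (Nat.mod_modEq _ _)
      _ ≡ r [MOD a] := by simp [h, Nat.ModEq]
  have hrem := hr.2 _ (sum_sq_mod_mem_Ares ha A B C) hmod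
  refine mul_left_cancel₀ ha ?_
  linarith [Nat.mod_add_div (A ^ 2) a, Nat.mod_add_div (B ^ 2) a, Nat.mod_add_div (C ^ 2) a]

end Remainders

theorem stmt_0 (a : ℕ) (ha : a ≠ 0)
    (h : ∀ k : ℕ, ∃ r ∈ Rres a, ∀ s t : ℕ, a * k + r ≠ 4 ^ s * (8 * t + 7)) :
    ∀ N : ℕ, ∃ A B C : ℕ, N = A ^ 2 / a + B ^ 2 / a + C ^ 2 / a := by
  intro N
  obtain ⟨r, hr, hN⟩ := h N
  obtain ⟨A, B, C, hABC⟩ := exists_sum_three_sq _ hN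
  exact ⟨A, B, C, eq_sum_sq_div_of_mem_Rres ha hr hABC⟩
end

section
/- For every integer k ≥ 2, every natural number N can be written as the sum of three terms of the sequence (⌊n²/2^k⌋)_{n∈ℕ}, i.e., there exist natural numbers A, B, C with N = ⌊A²/2^k⌋ + ⌊B²/2^k⌋ + ⌊C²/2^k⌋. -/
/-!
A sum of three squares equal to `2 ^ e * N + 2` with `e ∈ {2, 3}` consists of two odd squares and a
multiple of `2 ^ e`, so dividing each square by `2 ^ e` and rounding down loses exactly the `2`.
Since `(2 ^ m * x) ^ 2 / 2 ^ (2 * m + e) = x ^ 2 / 2 ^ e`, it suffices that every natural number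
congruent to `2` modulo `4` is a sum of three squares.

For this, Dirichlet's theorem gives a prime `p = d * n - 1` with `d ≡ p ≡ 1` modulo `4`, and
quadratic reciprocity makes `-d` a square modulo `p`. This produces a positive definite integral
ternary form of determinant `1` that represents `n`. By Hermite's bound, a positive definite
integral form of determinant `1` in at most five variables represents `1`; the vector where it does
splits off, so by induction the form is a sum of squares of integral linear forms.
-/

open Matrix

section Condensation

variable {R : Type*} [CommRing R] {n : ℕ}

/-- The Chiò condensation of `A` with respect to its corner entry: the Schur complement of `A 0 0`
multiplied by `A 0 0`, which makes sense without division. If `A` is the Gram matrix of a basis,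
this is, up to the factor `A 0 0`, the Gram matrix of the projections of the remaining basis vectors
to the orthogonal complement of the first one. -/
def chioCondensation (A : Matrix (Fin (n + 1)) (Fin (n + 1)) R) : Matrix (Fin n) (Fin n) R :=
  of fun i j ↦ A 0 0 * A i.succ j.succ - A i.succ 0 * A 0 j.succ

theorem isSymm_chioCondensation {A : Matrix (Fin (n + 1)) (Fin (n + 1)) R} (hA : A.IsSymm) :
    (chioCondensation A).IsSymm :=
  .ext fun i j ↦ by simp [chioCondensation, hA.apply, mul_comm]

theorem det_eq_mul_det_of_col_zero_eq_zero (A : Matrix (Fin (n + 1)) (Fin (n + 1)) R)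
    (hA : ∀ i : Fin n, A i.succ 0 = 0) :
    A.det = A 0 0 * (A.submatrix Fin.succ Fin.succ).det := by
  simp [det_succ_column_zero, Fin.sum_univ_succ, hA, Fin.succAbove_zero]

theorem mul_det_chioCondensation (A : Matrix (Fin (n + 1)) (Fin (n + 1)) R) :
    A 0 0 * (chioCondensation A).det = A 0 0 ^ n * A.det := by
  let c : Fin (n + 1) → R := vecCons 1 fun _ ↦ A 0 0
  let v : Fin (n + 1) → R := vecCons 0 fun i ↦ A i.succ 0
  let B : Matrix (Fin (n + 1)) (Fin (n + 1)) R := of fun i j ↦ c i * A i j - v i * A 0 j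
  have hB : B.submatrix Fin.succ Fin.succ = chioCondensation A := by
    ext i j
    simp [B, c, v, chioCondensation]
  calc A 0 0 * (chioCondensation A).det = B.det := by
        rw [det_eq_mul_det_of_col_zero_eq_zero B fun i ↦ by simp [B, c, v, mul_comm], hB]
        simp [B, c, v]
    _ = (of fun i j ↦ c i * A i j).det :=
        (det_eq_of_forall_row_eq_smul_add_const v 0 rfl fun i j ↦ by simp [B, c, v]).symm
    _ = A 0 0 ^ n * A.det := by simp [det_mul_column, Fin.prod_univ_succ, c]

theorem mul_dotProduct_mulVec_eq_add (A : Matrix (Fin (n + 1)) (Fin (n + 1)) R)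
    (x y : Fin (n + 1) → R) :
    A 0 0 * (x ⬝ᵥ A *ᵥ y) =
      (x ⬝ᵥ Aᵀ 0) * (A 0 ⬝ᵥ y) + vecTail x ⬝ᵥ chioCondensation A *ᵥ vecTail y := by
  have hterm (i j : Fin (n + 1)) : A 0 0 * (x i * (A i j * y j)) =
      x i * A i 0 * (A 0 j * y j) + x i * ((A 0 0 * A i j - A i 0 * A 0 j) * y j) := by ring
  simp only [dotProduct, mulVec, transpose_apply, Finset.mul_sum, Finset.sum_mul, hterm,
    Finset.sum_add_distrib]
  congr 1
  · rw [Finset.sum_comm]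
  · simp [Fin.sum_univ_succ, chioCondensation, vecTail, mul_comm]

theorem mul_dotProduct_mulVec_self_eq_sq_add {A : Matrix (Fin (n + 1)) (Fin (n + 1)) R}
    (hA : A.IsSymm) (x : Fin (n + 1) → R) :
    A 0 0 * (x ⬝ᵥ A *ᵥ x) =
      (A 0 ⬝ᵥ x) ^ 2 + vecTail x ⬝ᵥ chioCondensation A *ᵥ vecTail x := by
  rw [mul_dotProduct_mulVec_eq_add, hA.eq, dotProduct_comm x, sq]

theorem exists_eq_transpose_mul_self_of_chioCondensation
    {A : Matrix (Fin (n + 1)) (Fin (n + 1)) R} (hA : A.IsSymm) (h₀ : A 0 0 = 1)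
    {Q : Matrix (Fin n) (Fin n) R} (hQ : chioCondensation A = Qᵀ * Q) :
    ∃ T : Matrix (Fin (n + 1)) (Fin (n + 1)) R, A = Tᵀ * T := by
  refine ⟨of (vecCons (A 0) fun i ↦ vecCons 0 (Q i)), ?_⟩
  have hS (i j : Fin n) : A i.succ j.succ = A 0 i.succ * A 0 j.succ + (Qᵀ * Q) i j := by
    simp [← hQ, chioCondensation, h₀, hA.apply]
  ext i j
  cases i using Fin.cases <;> cases j using Fin.cases <;>
    simp [mul_apply, Fin.sum_univ_succ, h₀, hS, hA.apply]

theorem exists_isUnit_det_transpose_zero_eq_vecCons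
    {P : Matrix (Fin (n + 1)) (Fin (n + 1)) R} (hP : IsUnit P.det) (t : R) :
    ∃ U : Matrix (Fin (n + 2)) (Fin (n + 2)) R, IsUnit U.det ∧ Uᵀ 0 = vecCons t (Pᵀ 0) := by
  let V : Matrix (Fin (n + 2)) (Fin (n + 2)) R :=
    of (vecCons (vecCons 1 (Pi.single 0 t)) fun i ↦ vecCons 0 (P i))
  have hV : V.det = P.det := by
    rw [det_eq_mul_det_of_col_zero_eq_zero V fun _ ↦ rfl]
    exact one_mul _
  refine ⟨V.submatrix id (Equiv.swap 0 1), ?_, ?_⟩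
  · rw [det_permute', hV]
    exact ((Units.isUnit _).map (Int.castRingHom R)).mul hP
  · ext i
    cases i using Fin.cases with
    | zero => simp [V]
    | succ i => simp [V]

end Condensation

section PosDef

variable {R : Type*} [CommRing R]

theorem posDef_transpose_mul_mul_same {ι : Type*} [Fintype ι] [DecidableEq ι] [PartialOrder R]
    [StarRing R] [TrivialStar R] {A P : Matrix ι ι R} (hA : A.PosDef) (hP : IsUnit P.det) :
    (Pᵀ * A * P).PosDef := by
  have hinj := mulVec_injective_of_isUnit ((isUnit_iff_isUnit_det P).2 hP)
  simpa using hA.conjTranspose_mul_mul_same hinj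

variable [LinearOrder R] [IsStrictOrderedRing R] [StarRing R] [TrivialStar R] {n : ℕ}
  {A : Matrix (Fin (n + 1)) (Fin (n + 1)) R}

theorem posDef_chioCondensation (hA : A.PosDef) : (chioCondensation A).PosDef := by
  have hsymm : A.IsSymm := isHermitian_iff_isSymm.1 hA.isHermitian
  have ha : 0 < A 0 0 := hA.diag_pos
  refine .of_dotProduct_mulVec_pos
    (isHermitian_iff_isSymm.2 (isSymm_chioCondensation hsymm)) fun y hy ↦ ?_
  -- `x` is the multiple `A 0 0 • y` of `y`, made orthogonal to the first basis vector.
  let x : Fin (n + 1) → R := vecCons (-(vecTail (A 0) ⬝ᵥ y)) (A 0 0 • y)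
  have hx : x ≠ 0 := fun h ↦ smul_ne_zero ha.ne' hy (congrArg vecTail h)
  have hx₀ : A 0 ⬝ᵥ x = 0 := by simp [x, vecHead]
  have hpos : 0 < A 0 0 * (x ⬝ᵥ A *ᵥ x) :=
    mul_pos ha (by simpa using hA.dotProduct_mulVec_pos hx)
  rw [mul_dotProduct_mulVec_self_eq_sq_add hsymm, hx₀] at hpos
  simpa [x, mulVec_smul, ha] using hpos

theorem posDef_of_posDef_chioCondensation (hsymm : A.IsSymm) (ha : 0 < A 0 0)
    (hA : (chioCondensation A).PosDef) : A.PosDef := by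
  refine .of_dotProduct_mulVec_pos (isHermitian_iff_isSymm.2 hsymm) fun x hx ↦ ?_
  rw [star_trivial]
  refine pos_of_mul_pos_right ?_ ha.le
  rw [mul_dotProduct_mulVec_self_eq_sq_add hsymm]
  by_cases ht : vecTail x = 0
  · have hx₀ : x 0 ≠ 0 := fun h ↦ hx (funext (Fin.cases h (congrFun ht)))
    have hdot : A 0 ⬝ᵥ x = A 0 0 * x 0 := by
      rw [← cons_head_tail x, dotProduct_cons, ht]
      simp [vecHead]
    rw [ht, hdot, zero_dotProduct, add_zero]
    positivity
  · exact add_pos_of_nonneg_of_pos (sq_nonneg _) (by simpa using hA.dotProduct_mulVec_pos ht)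

theorem posDef_fin_three {A : Matrix (Fin 3) (Fin 3) R} (hA : A.IsSymm) (h₁ : 0 < A 0 0)
    (h₂ : 0 < A 0 0 * A 1 1 - A 1 0 * A 0 1) (h₃ : 0 < A.det) : A.PosDef := by
  have hA₁ := isSymm_chioCondensation hA
  have hcorner : chioCondensation (chioCondensation A) 0 0 = A 0 0 * A.det := by
    simp only [det_fin_three, chioCondensation, of_apply, Fin.succ_zero_eq_one,
      Fin.succ_one_eq_two]
    ring
  have hempty : (chioCondensation (chioCondensation (chioCondensation A))).PosDef :=
    .of_dotProduct_mulVec_pos (Subsingleton.elim _ _) fun x hx ↦ absurd (Subsingleton.elim x 0) hx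
  refine posDef_of_posDef_chioCondensation hA h₁ <|
    posDef_of_posDef_chioCondensation hA₁ h₂ <|
      posDef_of_posDef_chioCondensation (isSymm_chioCondensation hA₁) ?_ hempty
  rw [hcorner]
  positivity

end PosDef

section Hermite

variable {n : ℕ}

theorem det_transpose_mul_mul_same_of_isUnit {ι : Type*} [Fintype ι] [DecidableEq ι]
    (A : Matrix ι ι ℤ) {P : Matrix ι ι ℤ} (hP : IsUnit P.det) : (Pᵀ * A * P).det = A.det := by
  rw [det_mul, det_mul, det_transpose, mul_right_comm, ← sq, Int.isUnit_sq hP, one_mul]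

/-- The corner entry of `A` is smallest among the corner entries of all matrices integrally
congruent to `A`; for a positive definite form this says that the first basis vector is a shortest
nonzero vector. -/
def IsCornerMinimal (A : Matrix (Fin (n + 1)) (Fin (n + 1)) ℤ) : Prop :=
  ∀ U : Matrix (Fin (n + 1)) (Fin (n + 1)) ℤ, IsUnit U.det → A 0 0 ≤ (Uᵀ * A * U) 0 0

theorem exists_isCornerMinimal {A : Matrix (Fin (n + 1)) (Fin (n + 1)) ℤ} (hA : A.PosDef) :
    ∃ P : Matrix (Fin (n + 1)) (Fin (n + 1)) ℤ, IsUnit P.det ∧ IsCornerMinimal (Pᵀ * A * P) := by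
  obtain ⟨P, hP, hmin⟩ := exists_minimalFor_of_wellFoundedLT
    (fun P : Matrix (Fin (n + 1)) (Fin (n + 1)) ℤ ↦ IsUnit P.det)
    (fun P ↦ ((Pᵀ * A * P) 0 0).toNat) ⟨1, by simp⟩
  refine ⟨P, hP, fun U hU ↦ ?_⟩
  have hPU : IsUnit (P * U).det := by
    rw [det_mul]
    exact hP.mul hU
  have hpos : 0 < ((P * U)ᵀ * A * (P * U)) 0 0 := (posDef_transpose_mul_mul_same hA hPU).diag_pos
  have hle : ((Pᵀ * A * P) 0 0).toNat ≤ (((P * U)ᵀ * A * (P * U)) 0 0).toNat :=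
    (le_total _ _).elim id (hmin hPU)
  have hassoc : Uᵀ * (Pᵀ * A * P) * U = (P * U)ᵀ * A * (P * U) := by
    simp only [transpose_mul, Matrix.mul_assoc]
  rw [hassoc]
  omega

theorem exists_abs_two_mul_mul_add_le {a : ℤ} (ha : 0 < a) (d : ℤ) :
    ∃ t : ℤ, |2 * (a * t + d)| ≤ a := by
  lift a to ℕ using ha.le
  have : NeZero a := ⟨by omega⟩
  obtain ⟨t, ht⟩ := (ZMod.intCast_eq_intCast_iff_dvd_sub d (d : ZMod a).valMinAbs a).1
    (ZMod.coe_valMinAbs _).symm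
  obtain ⟨hlower, hupper⟩ := (d : ZMod a).valMinAbs_mem_Ioc
  exact ⟨t, abs_le.2 ⟨by linarith, by linarith⟩⟩

-- Lift a vector of the projected lattice so that its component along the first basis vector `e` is
-- at most half of `e`; by minimality the lift is at least as long as `e`.
theorem IsCornerMinimal.three_mul_sq_le {A : Matrix (Fin (n + 2)) (Fin (n + 2)) ℤ}
    (hmin : IsCornerMinimal A) (hA : A.PosDef) {P : Matrix (Fin (n + 1)) (Fin (n + 1)) ℤ}
    (hP : IsUnit P.det) : 3 * A 0 0 ^ 2 ≤ 4 * (Pᵀ * chioCondensation A * P) 0 0 := by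
  have ha : 0 < A 0 0 := hA.diag_pos
  obtain ⟨t, ht⟩ := exists_abs_two_mul_mul_add_le ha (vecTail (A 0) ⬝ᵥ Pᵀ 0)
  obtain ⟨U, hU, hU₀⟩ := exists_isUnit_det_transpose_zero_eq_vecCons hP t
  have hdot : A 0 ⬝ᵥ Uᵀ 0 = A 0 0 * t + vecTail (A 0) ⬝ᵥ Pᵀ 0 := by
    rw [hU₀, dotProduct_cons, vecHead]
  have hle : A 0 0 * A 0 0 ≤ (A 0 ⬝ᵥ Uᵀ 0) ^ 2 + (Pᵀ * chioCondensation A * P) 0 0 :=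
    calc A 0 0 * A 0 0 ≤ A 0 0 * (Uᵀ * A * U) 0 0 := mul_le_mul_of_nonneg_left (hmin U hU) ha.le
      _ = A 0 0 * (Uᵀ 0 ⬝ᵥ A *ᵥ Uᵀ 0) := by rw [mul_mul_apply]
      _ = _ := by
        rw [mul_dotProduct_mulVec_self_eq_sq_add (isHermitian_iff_isSymm.1 hA.isHermitian),
          mul_mul_apply, hU₀, tail_cons]
  have hsq : (2 * (A 0 ⬝ᵥ Uᵀ 0)) ^ 2 ≤ A 0 0 ^ 2 := by
    rw [hdot]
    exact sq_le_sq.2 (ht.trans (le_abs_self _))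
  linarith

theorem exists_hermite_bound {A : Matrix (Fin (n + 1)) (Fin (n + 1)) ℤ} (hA : A.PosDef) :
    ∃ P : Matrix (Fin (n + 1)) (Fin (n + 1)) ℤ, IsUnit P.det ∧
      3 ^ (n + 1).choose 2 * (Pᵀ * A * P) 0 0 ^ (n + 1) ≤ 4 ^ (n + 1).choose 2 * A.det := by
  induction n with
  | zero => exact ⟨1, by simp, by simp⟩
  | succ n ih =>
    obtain ⟨P, hP, hmin⟩ := exists_isCornerMinimal hA
    refine ⟨P, hP, ?_⟩
    have hB : (Pᵀ * A * P).PosDef := posDef_transpose_mul_mul_same hA hP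
    rw [← det_transpose_mul_mul_same_of_isUnit A hP]
    generalize Pᵀ * A * P = B at hmin hB ⊢
    obtain ⟨Q, hQ, hbound⟩ := ih (posDef_chioCondensation hB)
    have ha : 0 < B 0 0 := hB.diag_pos
    have hthree := hmin.three_mul_sq_le hB hQ
    have hchoose : (n + 2).choose 2 = (n + 1) + (n + 1).choose 2 := by
      rw [Nat.choose_succ_succ', Nat.choose_one_right]
    generalize (Qᵀ * chioCondensation B * Q) 0 0 = s at hbound hthree
    generalize (n + 1).choose 2 = c at hbound hchoose
    refine le_of_mul_le_mul_right ?_ (pow_pos ha (n + 1))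
    calc 3 ^ (n + 2).choose 2 * B 0 0 ^ (n + 2) * B 0 0 ^ (n + 1)
        = B 0 0 * (3 ^ c * (3 * B 0 0 ^ 2) ^ (n + 1)) := by rw [hchoose]; ring
      _ ≤ B 0 0 * (3 ^ c * (4 * s) ^ (n + 1)) := by gcongr
      _ = B 0 0 * (4 ^ (n + 1) * (3 ^ c * s ^ (n + 1))) := by ring
      _ ≤ B 0 0 * (4 ^ (n + 1) * (4 ^ c * (chioCondensation B).det)) := by gcongr
      _ = 4 ^ (n + 1) * 4 ^ c * (B 0 0 * (chioCondensation B).det) := by ring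
      _ = 4 ^ (n + 2).choose 2 * B.det * B 0 0 ^ (n + 1) := by
        rw [mul_det_chioCondensation, hchoose]; ring

theorem exists_corner_eq_one_of_det_eq_one (hn : n ≤ 4)
    {A : Matrix (Fin (n + 1)) (Fin (n + 1)) ℤ} (hA : A.PosDef) (hdet : A.det = 1) :
    ∃ P : Matrix (Fin (n + 1)) (Fin (n + 1)) ℤ, IsUnit P.det ∧ (Pᵀ * A * P) 0 0 = 1 := by
  obtain ⟨P, hP, hbound⟩ := exists_hermite_bound hA
  refine ⟨P, hP, le_antisymm (not_lt.1 fun htwo ↦ ?_) ?_⟩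
  · have : 3 ^ (n + 1).choose 2 * 2 ^ (n + 1) ≤ (4 : ℤ) ^ (n + 1).choose 2 := by
      rw [hdet, mul_one] at hbound
      exact hbound.trans' (by gcongr; exact htwo)
    interval_cases n <;> norm_num [Nat.choose] at this
  · exact (posDef_transpose_mul_mul_same hA hP).diag_pos

theorem exists_eq_transpose_mul_self_of_det_eq_one (hn : n ≤ 5) {A : Matrix (Fin n) (Fin n) ℤ}
    (hA : A.PosDef) (hdet : A.det = 1) : ∃ T : Matrix (Fin n) (Fin n) ℤ, A = Tᵀ * T := by
  induction n with
  | zero => exact ⟨0, Subsingleton.elim _ _⟩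
  | succ n ih =>
    obtain ⟨P, hP, hcorner⟩ := exists_corner_eq_one_of_det_eq_one (by omega) hA hdet
    have hB : (Pᵀ * A * P).PosDef := posDef_transpose_mul_mul_same hA hP
    have hdetC : (chioCondensation (Pᵀ * A * P)).det = 1 := by
      simpa [hcorner, det_transpose_mul_mul_same_of_isUnit A hP, hdet] using
        mul_det_chioCondensation (Pᵀ * A * P)
    obtain ⟨Q, hQ⟩ := ih (by omega) (posDef_chioCondensation hB) hdetC
    obtain ⟨T, hT⟩ := exists_eq_transpose_mul_self_of_chioCondensation
      (isHermitian_iff_isSymm.1 hB.isHermitian) hcorner hQ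
    refine ⟨T * P⁻¹, ?_⟩
    calc A = (P * P⁻¹)ᵀ * A * (P * P⁻¹) := by simp [mul_nonsing_inv P hP]
      _ = P⁻¹ᵀ * (Pᵀ * A * P) * P⁻¹ := by simp only [transpose_mul, Matrix.mul_assoc]
      _ = (T * P⁻¹)ᵀ * (T * P⁻¹) := by simp only [hT, transpose_mul, Matrix.mul_assoc]

end Hermite

section ThreeSquares

theorem exists_eq_sum_three_sq_of_dvd {n d p x : ℤ} (hd : 0 < d) (hp : 0 < p)
    (hdn : d * n = p + 1) (hx : p ∣ x ^ 2 + d) : ∃ a b c : ℤ, n = a ^ 2 + b ^ 2 + c ^ 2 := by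
  obtain ⟨y, hy⟩ := hx
  have hy₀ : 0 < y := pos_of_mul_pos_right (hy ▸ by positivity) hp.le
  let A : Matrix (Fin 3) (Fin 3) ℤ := !![y, x, 1; x, p, 0; 1, 0, n]
  have hdet : A.det = 1 := by
    simp only [A, det_fin_three, of_apply, cons_val]
    linear_combination hdn - n * hy
  have hsymm : A.IsSymm := by
    ext i j
    fin_cases i <;> fin_cases j <;> rfl
  have hminor : 0 < A 0 0 * A 1 1 - A 1 0 * A 0 1 := by
    change 0 < y * p - x * x
    linarith
  obtain ⟨T, hT⟩ := exists_eq_transpose_mul_self_of_det_eq_one (by norm_num)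
    (posDef_fin_three hsymm hy₀ hminor (hdet ▸ one_pos)) hdet
  refine ⟨T 0 2, T 1 2, T 2 2, ?_⟩
  calc n = (Tᵀ * T) 2 2 := by rw [← hT]; rfl
    _ = T 0 2 ^ 2 + T 1 2 ^ 2 + T 2 2 ^ 2 := by
      simp only [mul_apply, transpose_apply, Fin.sum_univ_three, sq]

theorem exists_prime_add_one_eq_mul {n : ℕ} (hn : Even n) (hn₀ : n ≠ 0) :
    ∃ p d : ℕ, p.Prime ∧ d % 4 = 1 ∧ p + 1 = d * n := by
  obtain ⟨m, rfl⟩ := Nat.exists_eq_succ_of_ne_zero hn₀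
  have hm : Odd m := by simpa [Nat.even_add_one] using hn
  have hcoprime : m.Coprime (4 * (m + 1)) :=
    (hm.coprime_two_right.pow_right 2).mul_right (by simp)
  obtain ⟨p, hmp, hp, hmod⟩ := Nat.forall_exists_prime_gt_and_modEq m (by positivity) hcoprime
  obtain ⟨j, hj⟩ := (Nat.modEq_iff_dvd' hmp.le).1 hmod.symm
  refine ⟨p, 4 * j + 1, hp, by omega, ?_⟩
  calc p + 1 = 4 * (m + 1) * j + m + 1 := by omega
    _ = (4 * j + 1) * (m + 1) := by ring

theorem jacobiSym_neg_eq_one_of_dvd_add_one {d p : ℕ} (hd : d % 4 = 1) (hp : p % 4 = 1)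
    (h : d ∣ p + 1) : jacobiSym (-d) p = 1 := by
  have hpodd : Odd p := Nat.odd_iff.2 (by omega)
  have hdodd : Odd d := Nat.odd_iff.2 (by omega)
  have hmod : (p : ℤ) % d = -1 % d :=
    (Int.modEq_iff_dvd.2 (by simpa using Int.natCast_dvd_natCast.2 h)).symm
  calc jacobiSym (-d) p = jacobiSym d p := by
        rw [jacobiSym.neg _ hpodd, ZMod.χ₄_nat_one_mod_four hp, one_mul]
    _ = jacobiSym p d := jacobiSym.quadratic_reciprocity_one_mod_four hd hpodd
    _ = jacobiSym (-1) d := by rw [jacobiSym.mod_left, hmod, ← jacobiSym.mod_left]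
    _ = 1 := by rw [jacobiSym.at_neg_one hdodd, ZMod.χ₄_nat_one_mod_four hd]

theorem exists_eq_sum_three_sq_of_mod_four_eq_two {n : ℕ} (hn : n % 4 = 2) :
    ∃ x y z : ℕ, n = x ^ 2 + y ^ 2 + z ^ 2 := by
  obtain ⟨p, d, hp, hd, hpd⟩ :=
    exists_prime_add_one_eq_mul (n := n) (Nat.even_iff.2 (by omega)) (by omega)
  have hp₄ : p % 4 = 1 := by
    have : (p + 1) % 4 = 2 := by rw [hpd, Nat.mul_mod, hd, hn]
    omega
  have := Fact.mk hp
  obtain ⟨r, hr⟩ := ZMod.isSquare_of_jacobiSym_eq_one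
    (jacobiSym_neg_eq_one_of_dvd_add_one hd hp₄ ⟨n, hpd⟩)
  have hdvd : (p : ℤ) ∣ (r.val : ℤ) ^ 2 + d := by
    rw [← ZMod.intCast_zmod_eq_zero_iff_dvd]
    push_cast [ZMod.natCast_zmod_val] at hr ⊢
    linear_combination -hr
  obtain ⟨a, b, c, habc⟩ := exists_eq_sum_three_sq_of_dvd (n := n) (by omega)
    (by exact_mod_cast hp.pos) (by exact_mod_cast hpd.symm) hdvd
  refine ⟨a.natAbs, b.natAbs, c.natAbs, ?_⟩
  zify
  simpa using habc

end ThreeSquares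

theorem sq_mod_eight (x : ℕ) : x ^ 2 % 8 = 0 ∨ x ^ 2 % 8 = 1 ∨ x ^ 2 % 8 = 4 := by
  have : x % 8 < 8 := Nat.mod_lt _ (by norm_num)
  rw [Nat.pow_mod]
  interval_cases x % 8 <;> simp

theorem eq_sum_sq_div_of_mul_add_two_eq {q N x y z : ℕ} (hq : q = 4 ∨ q = 8)
    (h : q * N + 2 = x ^ 2 + y ^ 2 + z ^ 2) : N = x ^ 2 / q + y ^ 2 / q + z ^ 2 / q := by
  have hx := sq_mod_eight x
  have hy := sq_mod_eight y
  have hz := sq_mod_eight z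
  rcases hq with rfl | rfl <;> omega

theorem stmt_11 (k : ℕ) (hk : 2 ≤ k) (N : ℕ) :
    ∃ A B C : ℕ, N = A ^ 2 / 2 ^ k + B ^ 2 / 2 ^ k + C ^ 2 / 2 ^ k := by
  obtain ⟨m, e, he, rfl⟩ : ∃ m e, (e = 2 ∨ e = 3) ∧ k = 2 * m + e :=
    ⟨k / 2 - 1, k % 2 + 2, by omega, by omega⟩
  have hq : 2 ^ e = 4 ∨ 2 ^ e = 8 := by rcases he with rfl | rfl <;> simp
  have hscale (x : ℕ) : (2 ^ m * x) ^ 2 / 2 ^ (2 * m + e) = x ^ 2 / 2 ^ e := by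
    rw [mul_pow, ← pow_mul', pow_add]
    exact Nat.mul_div_mul_left _ _ (by positivity)
  have hmod : (2 ^ e * N + 2) % 4 = 2 := by rcases hq with h | h <;> rw [h] <;> omega
  obtain ⟨x, y, z, hxyz⟩ := exists_eq_sum_three_sq_of_mod_four_eq_two hmod
  refine ⟨2 ^ m * x, 2 ^ m * y, 2 ^ m * z, ?_⟩
  simp only [hscale]
  exact eq_sum_sq_div_of_mul_add_two_eq hq hxyz
end
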